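/- arXiv:2404.05358 — 7 statements merged into one kernel-verified Lean document; each statement's English description precedes it below -/
import Mathlib

section
/- Assume the triples φ = (φ₁,φ₂,φ₃) and ψ = (ψ₁,ψ₂,ψ₃) are C¹ on [0,L] and vanish at both endpoints 0 and L (so that all boundary terms vanish). Then the operator J(z) is skew-adjoint in the L² inner product: (φ, J(z)ψ) = −(J(z)φ, ψ). -/
open MeasureTheory intervalIntegral

/-- The interconnection operator `J(z)` of the port-Hamiltonian formulation of the
compressible non-isothermal Euler equations, acting componentwise on a C¹ triple
`ψ = (ψ₁, ψ₂, ψ₃)` of functions on `[0,L]`. -/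
noncomputable def Jop (lam d : ℝ) (ρ e p v : ℝ → ℝ) (ψ₁ ψ₂ ψ₃ : ℝ → ℝ) :
    (ℝ → ℝ) × (ℝ → ℝ) × (ℝ → ℝ) :=
  (fun x => -(deriv ψ₂ x),
   fun x => -(deriv ψ₁ x) - lam / (2 * d) * v x * |v x| * ψ₃ x
      - e x / ρ x * deriv ψ₃ x - 1 / ρ x * deriv (fun y => p y * ψ₃ y) x,
   fun x => lam / (2 * d) * v x * |v x| * ψ₂ x
      - deriv (fun y => e y / ρ y * ψ₂ y) x - p x * deriv (fun y => 1 / ρ y * ψ₂ y) x)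

/-- The L² pairing `(φ,ψ) = ∫₀ᴸ (φ₁ψ₁ + φ₂ψ₂ + φ₃ψ₃) dx` of two triples of functions. -/
noncomputable def L2pairing (L : ℝ) (φ ψ : (ℝ → ℝ) × (ℝ → ℝ) × (ℝ → ℝ)) : ℝ :=
  ∫ x in (0:ℝ)..L, (φ.1 x * ψ.1 x + φ.2.1 x * ψ.2.1 x + φ.2.2 x * ψ.2.2 x)

/-- if the C¹ triples `φ` and `ψ` vanish at both endpoints of the pipe
(so that all boundary terms vanish), then `J(z)` is skew-adjoint in the L² inner
product: `(φ, J(z)ψ) = −(J(z)φ, ψ)`. -/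
theorem Jop_skew_adjoint
    (L lam d : ℝ) (hL : 0 < L) (hd : d ≠ 0)
    (ρ e p : ℝ → ℝ) (hρ : ContDiff ℝ 1 ρ) (he : ContDiff ℝ 1 e) (hp : ContDiff ℝ 1 p)
    (hρ0 : ∀ x ∈ Set.Icc (0:ℝ) L, ρ x ≠ 0)
    (v : ℝ → ℝ) (hv : Continuous v)
    (φ₁ φ₂ φ₃ ψ₁ ψ₂ ψ₃ : ℝ → ℝ)
    (hφ₁ : ContDiff ℝ 1 φ₁) (hφ₂ : ContDiff ℝ 1 φ₂) (hφ₃ : ContDiff ℝ 1 φ₃)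
    (hψ₁ : ContDiff ℝ 1 ψ₁) (hψ₂ : ContDiff ℝ 1 ψ₂) (hψ₃ : ContDiff ℝ 1 ψ₃)
    (hφ₁0 : φ₁ 0 = 0) (hφ₂0 : φ₂ 0 = 0) (hφ₃0 : φ₃ 0 = 0)
    (hφ₁L : φ₁ L = 0) (hφ₂L : φ₂ L = 0) (hφ₃L : φ₃ L = 0)
    (hψ₁0 : ψ₁ 0 = 0) (hψ₂0 : ψ₂ 0 = 0) (hψ₃0 : ψ₃ 0 = 0)
    (hψ₁L : ψ₁ L = 0) (hψ₂L : ψ₂ L = 0) (hψ₃L : ψ₃ L = 0) :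
    L2pairing L (φ₁, φ₂, φ₃) (Jop lam d ρ e p v ψ₁ ψ₂ ψ₃)
      = -(L2pairing L (Jop lam d ρ e p v φ₁ φ₂ φ₃) (ψ₁, ψ₂, ψ₃)) := by
  have hIcc : Set.uIcc (0:ℝ) L = Set.Icc 0 L := Set.uIcc_of_le hL.le
  have hder : ∀ f : ℝ → ℝ, ContDiff ℝ 1 f → ∀ x, HasDerivAt f (deriv f x) x := fun f hf x =>
    (hf.differentiable (by norm_num) x).hasDerivAt
  have hcd : ∀ f : ℝ → ℝ, ContDiff ℝ 1 f → ContinuousOn (deriv f) (Set.Icc 0 L) := fun f hf =>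
    (hf.continuous_deriv (by norm_num)).continuousOn
  have hc : ∀ f : ℝ → ℝ, ContDiff ℝ 1 f → ContinuousOn f (Set.Icc 0 L) := fun f hf =>
    hf.continuous.continuousOn
  have d1 : ∀ f : ℝ → ℝ, ContDiff ℝ 1 f → ∀ x, HasDerivAt (fun y => p y * f y)
      (deriv p x * f x + p x * deriv f x) x := fun f hf x => (hder p hp x).mul (hder f hf x)
  have d2 : ∀ f : ℝ → ℝ, ContDiff ℝ 1 f → ∀ x ∈ Set.Icc (0:ℝ) L,
      HasDerivAt (fun y => e y / ρ y * f y)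
      ((deriv e x * ρ x - e x * deriv ρ x) / ρ x ^ 2 * f x + e x / ρ x * deriv f x) x :=
    fun f hf x hx => ((hder e he x).div (hder ρ hρ x) (hρ0 x hx)).mul (hder f hf x)
  have d3 : ∀ f : ℝ → ℝ, ContDiff ℝ 1 f → ∀ x ∈ Set.Icc (0:ℝ) L,
      HasDerivAt (fun y => 1 / ρ y * f y)
      ((0 * ρ x - 1 * deriv ρ x) / ρ x ^ 2 * f x + 1 / ρ x * deriv f x) x :=
    fun f hf x hx => ((hasDerivAt_const x (1:ℝ)).div (hder ρ hρ x) (hρ0 x hx)).mul (hder f hf x)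
  have c1 : ∀ f : ℝ → ℝ, ContDiff ℝ 1 f →
      ContinuousOn (deriv (fun y => p y * f y)) (Set.Icc 0 L) := fun f hf =>
    hcd _ (hp.mul hf)
  have c0 : ContinuousOn (fun x => ρ x ^ 2) (Set.Icc 0 L) := (hc ρ hρ).pow 2
  have n0 : ∀ x ∈ Set.Icc (0:ℝ) L, ρ x ^ 2 ≠ 0 := fun x hx => pow_ne_zero 2 (hρ0 x hx)
  have c2 : ∀ f : ℝ → ℝ, ContDiff ℝ 1 f →
      ContinuousOn (deriv (fun y => e y / ρ y * f y)) (Set.Icc 0 L) := fun f hf => by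
    refine ContinuousOn.congr ?_ (fun x hx => (d2 f hf x hx).deriv)
    exact ((((((hcd e he).mul (hc ρ hρ)).sub ((hc e he).mul (hcd ρ hρ))).div c0 n0).mul
      (hc f hf)).add (((hc e he).div (hc ρ hρ) hρ0).mul (hcd f hf)))
  have c3 : ∀ f : ℝ → ℝ, ContDiff ℝ 1 f →
      ContinuousOn (deriv (fun y => 1 / ρ y * f y)) (Set.Icc 0 L) := fun f hf => by
    refine ContinuousOn.congr ?_ (fun x hx => (d3 f hf x hx).deriv)
    exact (((((continuousOn_const.mul (hc ρ hρ)).sub (continuousOn_const.mul (hcd ρ hρ))).div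
      c0 n0).mul (hc f hf)).add ((continuousOn_const.div (hc ρ hρ) hρ0).mul (hcd f hf)))
  have cv : ContinuousOn (fun x => lam / (2 * d) * v x * |v x|) (Set.Icc 0 L) := by
    fun_prop
  have cJ1 : ∀ f₁ f₂ f₃ : ℝ → ℝ, ContDiff ℝ 1 f₂ →
      ContinuousOn (Jop lam d ρ e p v f₁ f₂ f₃).1 (Set.Icc 0 L) := fun f₁ f₂ f₃ h₂ =>
    (hcd f₂ h₂).neg
  have cJ2 : ∀ f₁ f₂ f₃ : ℝ → ℝ, ContDiff ℝ 1 f₁ → ContDiff ℝ 1 f₃ →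
      ContinuousOn (Jop lam d ρ e p v f₁ f₂ f₃).2.1 (Set.Icc 0 L) := fun f₁ f₂ f₃ h₁ h₃ =>
    ((((hcd f₁ h₁).neg).sub (cv.mul (hc f₃ h₃))).sub
      (((hc e he).div (hc ρ hρ) hρ0).mul (hcd f₃ h₃))).sub
      ((continuousOn_const.div (hc ρ hρ) hρ0).mul (c1 f₃ h₃))
  have cJ3 : ∀ f₁ f₂ f₃ : ℝ → ℝ, ContDiff ℝ 1 f₂ →
      ContinuousOn (Jop lam d ρ e p v f₁ f₂ f₃).2.2 (Set.Icc 0 L) := fun f₁ f₂ f₃ h₂ =>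
    ((cv.mul (hc f₂ h₂)).sub (c2 f₂ h₂)).sub ((hc p hp).mul (c3 f₂ h₂))
  have cA := (((hc _ hφ₁).mul (cJ1 ψ₁ ψ₂ ψ₃ hψ₂)).add
    ((hc _ hφ₂).mul (cJ2 ψ₁ ψ₂ ψ₃ hψ₁ hψ₃))).add ((hc _ hφ₃).mul (cJ3 ψ₁ ψ₂ ψ₃ hψ₂))
  have cB := (((cJ1 φ₁ φ₂ φ₃ hφ₂).mul (hc _ hψ₁)).add
    ((cJ2 φ₁ φ₂ φ₃ hφ₁ hφ₃).mul (hc _ hψ₂))).add ((cJ3 φ₁ φ₂ φ₃ hφ₂).mul (hc _ hψ₃))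
  rw [← hIcc] at cA cB
  have iA := cA.intervalIntegrable (μ := volume)
  have iB := cB.intervalIntegrable (μ := volume)
  have key := integral_eq_sub_of_hasDerivAt (a := 0) (b := L)
    (f := fun x => -(φ₁ x * ψ₂ x) - φ₂ x * ψ₁ x - (e x / ρ x * φ₂ x) * ψ₃ x
      - (e x / ρ x * ψ₂ x) * φ₃ x - (1 / ρ x * φ₂ x) * (p x * ψ₃ x)
      - (1 / ρ x * ψ₂ x) * (p x * φ₃ x)) ?_ (iA.add iB)
  · have h2 := integral_add iA iB
    simp only [hφ₁0, hφ₂0, hφ₃0, hφ₁L, hφ₂L, hφ₃L, hψ₁0, hψ₂0, hψ₃0, hψ₁L, hψ₂L, hψ₃L,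
      mul_zero, zero_mul, sub_zero, neg_zero] at key
    exact eq_neg_of_add_eq_zero_left (h2.symm.trans key)
  · intro x hx
    rw [hIcc] at hx
    have D := (((((((hder _ hφ₁ x).mul (hder _ hψ₂ x)).neg).sub
      ((hder _ hφ₂ x).mul (hder _ hψ₁ x))).sub ((d2 _ hφ₂ x hx).mul (hder _ hψ₃ x))).sub
      ((d2 _ hψ₂ x hx).mul (hder _ hφ₃ x))).sub ((d3 _ hφ₂ x hx).mul (d1 _ hψ₃ x))).sub
      ((d3 _ hψ₂ x hx).mul (d1 _ hφ₃ x))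
    refine HasDerivAt.congr_deriv D ?_
    simp only [Jop, Pi.add_apply, Pi.mul_apply, (d1 _ hψ₃ x).deriv, (d1 _ hφ₃ x).deriv,
      (d2 _ hφ₂ x hx).deriv, (d2 _ hψ₂ x hx).deriv, (d3 _ hφ₂ x hx).deriv,
      (d3 _ hψ₂ x hx).deriv]
    ring
end

section
/- For all C¹ triples e₁ = (e₁₁,e₁₂,e₁₃) and e₂ = (e₂₁,e₂₂,e₂₃) on [0,L], the bilinear boundary identity (e₁, J(z)e₂) + (J(z)e₁, e₂) = [e₁(x)ᵀ Q(z)(x) e₂(x)]₀ᴸ holds, i.e. the left-hand side equals e₁(L)ᵀQ(z)(L)e₂(L) − e₁(0)ᵀQ(z)(0)e₂(0). -/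
open MeasureTheory intervalIntegral Matrix

/-- The boundary matrix `Q(z)(x) = [[0,−1,0],[−1,0,−(e+p)/ρ],[0,−(e+p)/ρ,0]]`. -/
noncomputable def Qmat (ρ e p : ℝ → ℝ) (x : ℝ) : Matrix (Fin 3) (Fin 3) ℝ :=
  !![0, -1, 0;
     -1, 0, -((e x + p x) / ρ x);
     0, -((e x + p x) / ρ x), 0]

theorem aux_d1 {p ψ : ℝ → ℝ} (hp : ContDiff ℝ 1 p) (hψ : ContDiff ℝ 1 ψ) (x : ℝ) :
    deriv (fun y => p y * ψ y) x = deriv p x * ψ x + p x * deriv ψ x := by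
  have h1 := (hp.differentiable one_ne_zero x).hasDerivAt
  have h2 := (hψ.differentiable one_ne_zero x).hasDerivAt
  exact (h1.mul h2).deriv

theorem aux_d2 {e ρ ψ : ℝ → ℝ} (he : ContDiff ℝ 1 e) (hρ : ContDiff ℝ 1 ρ)
    (hψ : ContDiff ℝ 1 ψ) (x : ℝ) (hx : ρ x ≠ 0) :
    deriv (fun y => e y / ρ y * ψ y) x
      = (deriv e x * ρ x - e x * deriv ρ x) / ρ x ^ 2 * ψ x + e x / ρ x * deriv ψ x := by
  have h1 := (he.differentiable one_ne_zero x).hasDerivAt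
  have h2 := (hψ.differentiable one_ne_zero x).hasDerivAt
  have h3 := (hρ.differentiable one_ne_zero x).hasDerivAt
  exact ((h1.div h3 hx).mul h2).deriv

theorem aux_J2 {L lam d : ℝ} {ρ e p v ψ₁ ψ₂ ψ₃ : ℝ → ℝ}
    (hρ : ContDiff ℝ 1 ρ) (he : ContDiff ℝ 1 e) (hp : ContDiff ℝ 1 p)
    (hρ0 : ∀ x ∈ Set.Icc (0:ℝ) L, ρ x ≠ 0) (hv : Continuous v)
    (h1 : ContDiff ℝ 1 ψ₁) (h2 : ContDiff ℝ 1 ψ₂) (h3 : ContDiff ℝ 1 ψ₃) :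
    ContinuousOn (Jop lam d ρ e p v ψ₁ ψ₂ ψ₃).1 (Set.Icc 0 L) ∧
    ContinuousOn (Jop lam d ρ e p v ψ₁ ψ₂ ψ₃).2.1 (Set.Icc 0 L) ∧
    ContinuousOn (Jop lam d ρ e p v ψ₁ ψ₂ ψ₃).2.2 (Set.Icc 0 L) := by
  have c1 := h1.continuous.continuousOn (s := Set.Icc 0 L)
  have c2 := h2.continuous.continuousOn (s := Set.Icc 0 L)
  have c3 := h3.continuous.continuousOn (s := Set.Icc 0 L)
  have cρ := hρ.continuous.continuousOn (s := Set.Icc 0 L)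
  have ce := he.continuous.continuousOn (s := Set.Icc 0 L)
  have cp := hp.continuous.continuousOn (s := Set.Icc 0 L)
  have cv := hv.continuousOn (s := Set.Icc 0 L)
  have d1 := (h1.continuous_deriv le_rfl).continuousOn (s := Set.Icc 0 L)
  have d2 := (h2.continuous_deriv le_rfl).continuousOn (s := Set.Icc 0 L)
  have d3 := (h3.continuous_deriv le_rfl).continuousOn (s := Set.Icc 0 L)
  have dρ := (hρ.continuous_deriv le_rfl).continuousOn (s := Set.Icc 0 L)
  have de := (he.continuous_deriv le_rfl).continuousOn (s := Set.Icc 0 L)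
  have dp := (hp.continuous_deriv le_rfl).continuousOn (s := Set.Icc 0 L)
  have hsq : ∀ x ∈ Set.Icc (0:ℝ) L, ρ x ^ 2 ≠ 0 := fun x hx => pow_ne_zero 2 (hρ0 x hx)
  have cq : ∀ {f : ℝ → ℝ}, ContDiff ℝ 1 f →
      ContinuousOn (deriv (fun y => f y / ρ y * ψ₂ y)) (Set.Icc 0 L) := by
    intro f hf
    have cf := hf.continuous.continuousOn (s := Set.Icc 0 L)
    have df := (hf.continuous_deriv le_rfl).continuousOn (s := Set.Icc 0 L)
    refine ContinuousOn.congr ?_ (fun x hx => aux_d2 hf hρ h2 x (hρ0 x hx))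
    exact ((((df.mul cρ).sub (cf.mul dρ)).div (cρ.pow 2) hsq).mul c2).add ((cf.div cρ hρ0).mul d2)
  have cm : ContinuousOn (deriv (fun y => p y * ψ₃ y)) (Set.Icc 0 L) :=
    ContinuousOn.congr ((dp.mul c3).add (cp.mul d3)) (fun x _ => aux_d1 hp h3 x)
  have cq1 := cq he
  have cq2 := cq (f := fun _ => 1) contDiff_const
  have cw : ContinuousOn (fun x => lam / (2 * d) * v x * |v x|) (Set.Icc 0 L) :=
    (continuousOn_const.mul cv).mul cv.abs
  exact ⟨d2.neg, ((d1.neg.sub (cw.mul c3)).sub ((ce.div cρ hρ0).mul d3)).sub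
    ((continuousOn_const.div cρ hρ0).mul cm), ((cw.mul c2).sub cq1).sub (cp.mul cq2)⟩

/-- for all C¹ triples `e₁`, `e₂` on `[0,L]` the bilinear boundary identity
`(e₁, J(z)e₂) + (J(z)e₁, e₂) = [e₁ᵀ Q(z) e₂]₀ᴸ` holds. -/
theorem Jop_boundary_identity
    (L lam d : ℝ) (hL : 0 < L) (hd : d ≠ 0)
    (ρ e p : ℝ → ℝ) (hρ : ContDiff ℝ 1 ρ) (he : ContDiff ℝ 1 e) (hp : ContDiff ℝ 1 p)
    (hρ0 : ∀ x ∈ Set.Icc (0:ℝ) L, ρ x ≠ 0)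
    (v : ℝ → ℝ) (hv : Continuous v)
    (e₁₁ e₁₂ e₁₃ e₂₁ e₂₂ e₂₃ : ℝ → ℝ)
    (h₁₁ : ContDiff ℝ 1 e₁₁) (h₁₂ : ContDiff ℝ 1 e₁₂) (h₁₃ : ContDiff ℝ 1 e₁₃)
    (h₂₁ : ContDiff ℝ 1 e₂₁) (h₂₂ : ContDiff ℝ 1 e₂₂) (h₂₃ : ContDiff ℝ 1 e₂₃) :
    L2pairing L (e₁₁, e₁₂, e₁₃) (Jop lam d ρ e p v e₂₁ e₂₂ e₂₃)
      + L2pairing L (Jop lam d ρ e p v e₁₁ e₁₂ e₁₃) (e₂₁, e₂₂, e₂₃)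
      = ![e₁₁ L, e₁₂ L, e₁₃ L] ⬝ᵥ (Qmat ρ e p L).mulVec ![e₂₁ L, e₂₂ L, e₂₃ L]
        - ![e₁₁ 0, e₁₂ 0, e₁₃ 0] ⬝ᵥ (Qmat ρ e p 0).mulVec ![e₂₁ 0, e₂₂ 0, e₂₃ 0] := by
  have huI : Set.uIcc 0 L = Set.Icc 0 L := Set.uIcc_of_le hL.le
  obtain ⟨a1, a2, a3⟩ := aux_J2 (lam := lam) (d := d) hρ he hp hρ0 hv h₁₁ h₁₂ h₁₃
  obtain ⟨b1, b2, b3⟩ := aux_J2 (lam := lam) (d := d) hρ he hp hρ0 hv h₂₁ h₂₂ h₂₃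
  have I1 : ContinuousOn (fun x => e₁₁ x * (Jop lam d ρ e p v e₂₁ e₂₂ e₂₃).1 x
      + e₁₂ x * (Jop lam d ρ e p v e₂₁ e₂₂ e₂₃).2.1 x
      + e₁₃ x * (Jop lam d ρ e p v e₂₁ e₂₂ e₂₃).2.2 x) (Set.Icc 0 L) :=
    ((h₁₁.continuous.continuousOn.mul b1).add (h₁₂.continuous.continuousOn.mul b2)).add
      (h₁₃.continuous.continuousOn.mul b3)
  have I2 : ContinuousOn (fun x => (Jop lam d ρ e p v e₁₁ e₁₂ e₁₃).1 x * e₂₁ x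
      + (Jop lam d ρ e p v e₁₁ e₁₂ e₁₃).2.1 x * e₂₂ x
      + (Jop lam d ρ e p v e₁₁ e₁₂ e₁₃).2.2 x * e₂₃ x) (Set.Icc 0 L) :=
    ((a1.mul h₂₁.continuous.continuousOn).add (a2.mul h₂₂.continuous.continuousOn)).add
      (a3.mul h₂₃.continuous.continuousOn)
  rw [← huI] at I1 I2
  have hadd := intervalIntegral.integral_add (μ := volume) I1.intervalIntegrable
    I2.intervalIntegrable
  have hF := intervalIntegral.integral_eq_sub_of_hasDerivAt
    (f := fun x => -(e₁₁ x * e₂₂ x) - e₁₂ x * e₂₁ x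
      - (e x + p x) / ρ x * (e₁₂ x * e₂₃ x + e₁₃ x * e₂₂ x)) (a := 0) (b := L) ?_
      (I1.add I2).intervalIntegrable
  · unfold L2pairing
    refine hadd.symm.trans (hF.trans ?_)
    simp [Qmat, Matrix.mulVec, dotProduct, Fin.sum_univ_three]
    ring
  · intro x hx
    rw [huI] at hx
    have hr := hρ0 x hx
    have k {f : ℝ → ℝ} (hf : ContDiff ℝ 1 f) : HasDerivAt f (deriv f x) x :=
      (hf.differentiable one_ne_zero x).hasDerivAt
    have hD := ((((k h₁₁).mul (k h₂₂)).neg).sub ((k h₁₂).mul (k h₂₁))).sub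
      ((((k he).add (k hp)).div (k hρ) hr).mul
        (((k h₁₂).mul (k h₂₃)).add ((k h₁₃).mul (k h₂₂))))
    refine hD.congr_deriv ?_
    have q1 := aux_d2 (e := fun _ => 1) contDiff_const hρ h₁₂ x hr
    have q2 := aux_d2 (e := fun _ => 1) contDiff_const hρ h₂₂ x hr
    simp only [deriv_const] at q1 q2
    simp only [Jop, Pi.add_apply, Pi.mul_apply, Pi.div_apply]
    rw [q1, q2, aux_d2 he hρ h₁₂ x hr, aux_d2 he hρ h₂₂ x hr, aux_d1 hp h₁₃, aux_d1 hp h₂₃]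
    generalize lam / (2 * d) = c
    field_simp
    ring
end

section
/- For all C¹ triples e₁ and e₂ on [0,L], the symmetric part of the L² pairing with J(z) is given by the boundary port variables: (e₁, J(z)e₂) + (J(z)e₁, e₂) = f_B[e₁]|_L·e_B[e₂]|_L + e_B[e₁]|_L·f_B[e₂]|_L + f_B[e₁]|_0·e_B[e₂]|_0 + e_B[e₁]|_0·f_B[e₂]|_0. -/
open MeasureTheory intervalIntegral

/-- Boundary flow at the outflow `x = L`: `f_B[ψ]|_L = −ψ₂(L)`. -/
noncomputable def fB_L (L : ℝ) (ψ₁ ψ₂ ψ₃ : ℝ → ℝ) : ℝ := -ψ₂ L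

/-- Boundary effort at the outflow `x = L`: `e_B[ψ]|_L = ψ₁(L) + ((e+p)/ρ)(L)·ψ₃(L)`. -/
noncomputable def eB_L (ρ e p : ℝ → ℝ) (L : ℝ) (ψ₁ ψ₂ ψ₃ : ℝ → ℝ) : ℝ :=
  ψ₁ L + (e L + p L) / ρ L * ψ₃ L

/-- Boundary flow at the inflow `x = 0`: `f_B[ψ]|_0 = ψ₂(0)`. -/
noncomputable def fB_0 (ψ₁ ψ₂ ψ₃ : ℝ → ℝ) : ℝ := ψ₂ 0

/-- Boundary effort at the inflow `x = 0`: `e_B[ψ]|_0 = ψ₁(0) + ((e+p)/ρ)(0)·ψ₃(0)`. -/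
noncomputable def eB_0 (ρ e p : ℝ → ℝ) (ψ₁ ψ₂ ψ₃ : ℝ → ℝ) : ℝ :=
  ψ₁ 0 + (e 0 + p 0) / ρ 0 * ψ₃ 0

theorem hasDeriv_of_C1 {f : ℝ → ℝ} (hf : ContDiff ℝ 1 f) (x : ℝ) : HasDerivAt f (deriv f x) x :=
  ((hf.differentiable (by norm_num)) x).hasDerivAt

theorem Jderivs {ρ e p a b : ℝ → ℝ} (hρ : ContDiff ℝ 1 ρ) (he : ContDiff ℝ 1 e)
    (hp : ContDiff ℝ 1 p) (ha : ContDiff ℝ 1 a) (hb : ContDiff ℝ 1 b) (x : ℝ) (hx : ρ x ≠ 0) :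
    deriv (fun y => p y * b y) x = deriv p x * b x + p x * deriv b x ∧
    deriv (fun y => e y / ρ y * a y) x
      = (deriv e x * ρ x - e x * deriv ρ x) / ρ x ^ 2 * a x + e x / ρ x * deriv a x ∧
    deriv (fun y => 1 / ρ y * a y) x
      = (0 * ρ x - 1 * deriv ρ x) / ρ x ^ 2 * a x + 1 / ρ x * deriv a x :=
  ⟨((hasDeriv_of_C1 hp x).mul (hasDeriv_of_C1 hb x)).deriv,
   (((hasDeriv_of_C1 he x).div (hasDeriv_of_C1 hρ x) hx).mul (hasDeriv_of_C1 ha x)).deriv,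
   (((hasDerivAt_const x (1:ℝ)).div (hasDeriv_of_C1 hρ x) hx).mul (hasDeriv_of_C1 ha x)).deriv⟩

theorem Jcont {L : ℝ} (lam d : ℝ) {ρ e p v a b c : ℝ → ℝ} (hρ : ContDiff ℝ 1 ρ)
    (he : ContDiff ℝ 1 e) (hp : ContDiff ℝ 1 p) (hρ0 : ∀ x ∈ Set.Icc (0:ℝ) L, ρ x ≠ 0)
    (hv : Continuous v) (ha : ContDiff ℝ 1 a) (hb : ContDiff ℝ 1 b) (hc : ContDiff ℝ 1 c) :
    ContinuousOn (Jop lam d ρ e p v a b c).1 (Set.Icc 0 L) ∧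
    ContinuousOn (Jop lam d ρ e p v a b c).2.1 (Set.Icc 0 L) ∧
    ContinuousOn (Jop lam d ρ e p v a b c).2.2 (Set.Icc 0 L) := by
  have cd : ∀ {f : ℝ → ℝ}, ContDiff ℝ 1 f → ContinuousOn (deriv f) (Set.Icc 0 L) :=
    fun hf => (hf.continuous_deriv le_rfl).continuousOn
  have da := cd ha
  have db := cd hb
  have dc := cd hc
  have dρ := cd hρ
  have de := cd he
  have dp := cd hp
  have ca := ha.continuous.continuousOn (s := Set.Icc 0 L)
  have cb := hb.continuous.continuousOn (s := Set.Icc 0 L)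
  have cc := hc.continuous.continuousOn (s := Set.Icc 0 L)
  have cρ := hρ.continuous.continuousOn (s := Set.Icc 0 L)
  have ce := he.continuous.continuousOn (s := Set.Icc 0 L)
  have cp := hp.continuous.continuousOn (s := Set.Icc 0 L)
  have cv := hv.continuousOn (s := Set.Icc 0 L)
  have hρ2 : ∀ x ∈ Set.Icc (0:ℝ) L, ρ x ^ 2 ≠ 0 := fun x hx => pow_ne_zero 2 (hρ0 x hx)
  have i1 : ContinuousOn (fun x => 1 / ρ x) (Set.Icc 0 L) := continuousOn_const.div cρ hρ0
  have i2 : ContinuousOn (fun x => e x / ρ x) (Set.Icc 0 L) := ce.div cρ hρ0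
  have i3 : ContinuousOn (fun x => (deriv e x * ρ x - e x * deriv ρ x) / ρ x ^ 2) (Set.Icc 0 L) :=
    ((de.mul cρ).sub (ce.mul dρ)).div (cρ.pow 2) hρ2
  have i4 : ContinuousOn (fun x => (0 * ρ x - 1 * deriv ρ x) / ρ x ^ 2) (Set.Icc 0 L) :=
    ((continuousOn_const.mul cρ).sub (continuousOn_const.mul dρ)).div (cρ.pow 2) hρ2
  have w : ContinuousOn (fun x => lam / (2 * d) * v x * |v x|) (Set.Icc 0 L) :=
    (continuousOn_const.mul cv).mul cv.abs
  refine ⟨db.neg, ?_, ?_⟩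
  · refine ContinuousOn.congr (((da.neg.sub (w.mul cc)).sub (i2.mul dc)).sub
      (i1.mul ((dp.mul cc).add (cp.mul dc)))) ?_
    intro x hx
    have h := (Jderivs hρ he hp hb hc x (hρ0 x hx)).1
    simp only [Jop, h]
    rfl
  · refine ContinuousOn.congr (((w.mul cb).sub ((i3.mul cb).add (i2.mul db))).sub
      (cp.mul ((i4.mul cb).add (i1.mul db)))) ?_
    intro x hx
    obtain ⟨-, h, h'⟩ := Jderivs hρ he hp hb hc x (hρ0 x hx)
    simp only [Jop, h, h']
    rfl

/-- for all C¹ triples `e₁`, `e₂` on `[0,L]`, the symmetric part of the L²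
pairing with `J(z)` is given by the boundary port variables. -/
theorem Jop_boundary_port_identity
    (L lam d : ℝ) (hL : 0 < L) (hd : d ≠ 0)
    (ρ e p : ℝ → ℝ) (hρ : ContDiff ℝ 1 ρ) (he : ContDiff ℝ 1 e) (hp : ContDiff ℝ 1 p)
    (hρ0 : ∀ x ∈ Set.Icc (0:ℝ) L, ρ x ≠ 0)
    (v : ℝ → ℝ) (hv : Continuous v)
    (e₁₁ e₁₂ e₁₃ e₂₁ e₂₂ e₂₃ : ℝ → ℝ)
    (h₁₁ : ContDiff ℝ 1 e₁₁) (h₁₂ : ContDiff ℝ 1 e₁₂) (h₁₃ : ContDiff ℝ 1 e₁₃)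
    (h₂₁ : ContDiff ℝ 1 e₂₁) (h₂₂ : ContDiff ℝ 1 e₂₂) (h₂₃ : ContDiff ℝ 1 e₂₃) :
    L2pairing L (e₁₁, e₁₂, e₁₃) (Jop lam d ρ e p v e₂₁ e₂₂ e₂₃)
      + L2pairing L (Jop lam d ρ e p v e₁₁ e₁₂ e₁₃) (e₂₁, e₂₂, e₂₃)
      = fB_L L e₁₁ e₁₂ e₁₃ * eB_L ρ e p L e₂₁ e₂₂ e₂₃
        + eB_L ρ e p L e₁₁ e₁₂ e₁₃ * fB_L L e₂₁ e₂₂ e₂₃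
        + fB_0 e₁₁ e₁₂ e₁₃ * eB_0 ρ e p e₂₁ e₂₂ e₂₃
        + eB_0 ρ e p e₁₁ e₁₂ e₁₃ * fB_0 e₂₁ e₂₂ e₂₃ := by
  have hu : Set.uIcc (0:ℝ) L = Set.Icc 0 L := Set.uIcc_of_le hL.le
  obtain ⟨a1, a2, a3⟩ := Jcont lam d hρ he hp hρ0 hv h₂₁ h₂₂ h₂₃
  obtain ⟨b1, b2, b3⟩ := Jcont lam d hρ he hp hρ0 hv h₁₁ h₁₂ h₁₃
  have c1 := (((h₁₁.continuous.continuousOn.mul a1).add (h₁₂.continuous.continuousOn.mul a2)).add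
    (h₁₃.continuous.continuousOn.mul a3))
  have c2 := (((b1.mul h₂₁.continuous.continuousOn).add (b2.mul h₂₂.continuous.continuousOn)).add
    (b3.mul h₂₃.continuous.continuousOn))
  rw [← hu] at c1 c2
  have I1 := c1.intervalIntegrable (μ := volume)
  have I2 := c2.intervalIntegrable (μ := volume)
  have key := integral_eq_sub_of_hasDerivAt
    (f := fun x => -(e₁₂ x * (e₂₁ x + (e x + p x) / ρ x * e₂₃ x))
      - (e₁₁ x + (e x + p x) / ρ x * e₁₃ x) * e₂₂ x) ?_ (I1.add I2)
  · unfold L2pairing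
    refine (integral_add I1 I2).symm.trans (key.trans ?_)
    simp only [fB_L, eB_L, fB_0, eB_0]
    ring
  · intro x hx
    rw [hu] at hx
    have hx0 := hρ0 x hx
    have D := fun {f : ℝ → ℝ} (hf : ContDiff ℝ 1 f) => hasDeriv_of_C1 hf x
    have Q := ((D he).add (D hp)).div (D hρ) hx0
    have F := (((D h₁₂).mul ((D h₂₁).add (Q.mul (D h₂₃)))).neg).sub
      (((D h₁₁).add (Q.mul (D h₁₃))).mul (D h₂₂))
    refine HasDerivAt.congr_deriv F ?_
    obtain ⟨r1, r2, r3⟩ := Jderivs hρ he hp h₂₂ h₂₃ x hx0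
    obtain ⟨s1, s2, s3⟩ := Jderivs hρ he hp h₁₂ h₁₃ x hx0
    simp only [Jop, Pi.add_apply, Pi.mul_apply, Pi.div_apply, r1, r2, r3, s1, s2, s3]
    field_simp
    ring
end

section
/- For every C¹ triple e_S on [0,L], the power-balance identity holds: ∫₀ᴸ e_S(x)·(J(z)e_S)(x) dx = f_B[e_S]|_L·e_B[e_S]|_L + f_B[e_S]|_0·e_B[e_S]|_0, i.e. the energy exchanged through the skew-adjoint interconnection operator is exactly accounted for by the boundary port variables. -/
open MeasureTheory intervalIntegral

/-- power balance for the skew-adjoint interconnection operator `J(z)`: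
for every C¹ triple `e_S = (eS₁, eS₂, eS₃)` on `[0,L]`,
`∫₀ᴸ e_S·(J(z)e_S) dx = f_B|_L · e_B|_L + f_B|_0 · e_B|_0`, where
`f_B|_L = −eS₂(L)`, `e_B|_L = eS₁(L) + ((e+p)/ρ)(L)·eS₃(L)`,
`f_B|_0 = eS₂(0)`,  `e_B|_0 = eS₁(0) + ((e+p)/ρ)(0)·eS₃(0)`. -/
theorem Jop_power_balance
    (L lam d : ℝ) (hL : 0 < L) (hd : d ≠ 0)
    (ρ e p : ℝ → ℝ) (hρ : ContDiff ℝ 1 ρ) (he : ContDiff ℝ 1 e) (hp : ContDiff ℝ 1 p)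
    (hρ0 : ∀ x ∈ Set.Icc (0:ℝ) L, ρ x ≠ 0)
    (v : ℝ → ℝ) (hv : Continuous v)
    (eS₁ eS₂ eS₃ : ℝ → ℝ)
    (h₁ : ContDiff ℝ 1 eS₁) (h₂ : ContDiff ℝ 1 eS₂) (h₃ : ContDiff ℝ 1 eS₃) :
    (∫ x in (0:ℝ)..L,
        (eS₁ x * (Jop lam d ρ e p v eS₁ eS₂ eS₃).1 x
          + eS₂ x * (Jop lam d ρ e p v eS₁ eS₂ eS₃).2.1 x
          + eS₃ x * (Jop lam d ρ e p v eS₁ eS₂ eS₃).2.2 x))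
      = (-eS₂ L) * (eS₁ L + (e L + p L) / ρ L * eS₃ L)
        + eS₂ 0 * (eS₁ 0 + (e 0 + p 0) / ρ 0 * eS₃ 0) := by
  have hu : Set.uIcc (0:ℝ) L = Set.Icc 0 L := Set.uIcc_of_le hL.le
  have hdiff : ∀ {f : ℝ → ℝ}, ContDiff ℝ 1 f → ∀ x, HasDerivAt f (deriv f x) x :=
    fun hf x => ((hf.differentiable one_ne_zero) x).hasDerivAt
  have hcd : ∀ {f : ℝ → ℝ}, ContDiff ℝ 1 f → ContinuousOn (deriv f) (Set.Icc 0 L) :=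
    fun hf => (hf.continuous_deriv le_rfl).continuousOn
  have hc : ∀ {f : ℝ → ℝ}, ContDiff ℝ 1 f → ContinuousOn f (Set.Icc 0 L) :=
    fun hf => hf.continuous.continuousOn
  set G : ℝ → ℝ := fun x =>
    -(deriv eS₁ x * eS₂ x + eS₁ x * deriv eS₂ x)
      - ((((deriv e x + deriv p x) * ρ x - (e x + p x) * deriv ρ x) / (ρ x) ^ 2)
          * (eS₂ x * eS₃ x)
        + (e x + p x) / ρ x * (deriv eS₂ x * eS₃ x + eS₂ x * deriv eS₃ x)) with hG
  have hF : ∀ x ∈ Set.uIcc (0:ℝ) L, HasDerivAt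
      (fun y => -(eS₁ y * eS₂ y) - (e y + p y) / ρ y * (eS₂ y * eS₃ y)) (G x) x := by
    intro x hx
    rw [hu] at hx
    exact ((hdiff h₁ x).mul (hdiff h₂ x)).neg.sub
      ((((hdiff he x).add (hdiff hp x)).div (hdiff hρ x) (hρ0 x hx)).mul
        ((hdiff h₂ x).mul (hdiff h₃ x)))
  have hGc : ContinuousOn G (Set.uIcc 0 L) := by
    rw [hu]
    have hρ2 : ∀ x ∈ Set.Icc (0:ℝ) L, (ρ x) ^ 2 ≠ 0 := fun x hx => pow_ne_zero 2 (hρ0 x hx)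
    exact (((hcd h₁).mul (hc h₂)).add ((hc h₁).mul (hcd h₂))).neg.sub
      (((((((hcd he).add (hcd hp)).mul (hc hρ)).sub (((hc he).add (hc hp)).mul (hcd hρ))).div
        ((hc hρ).pow 2) hρ2).mul ((hc h₂).mul (hc h₃))).add
        ((((hc he).add (hc hp)).div (hc hρ) hρ0).mul
          (((hcd h₂).mul (hc h₃)).add ((hc h₂).mul (hcd h₃)))))
  have key := integral_eq_sub_of_hasDerivAt hF hGc.intervalIntegrable
  rw [integral_congr (g := G), key]
  · ring
  · intro x hx
    rw [hu] at hx
    have hr := hρ0 x hx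
    have d1 : deriv (fun y => p y * eS₃ y) x = _ := ((hdiff hp x).mul (hdiff h₃ x)).deriv
    have d2 : deriv (fun y => e y / ρ y * eS₂ y) x = _ :=
      (((hdiff he x).div (hdiff hρ x) hr).mul (hdiff h₂ x)).deriv
    have d3 : deriv (fun y => 1 / ρ y * eS₂ y) x = _ :=
      (((hasDerivAt_const x (1:ℝ)).div (hdiff hρ x) hr).mul (hdiff h₂ x)).deriv
    simp only [Jop, hG, d1, d2, d3, Pi.div_apply]
    field_simp
    ring
end

section
/- (Local energy balance with friction cancellation.) Let ρ, v, e : U → ℝ be differentiable on an open set U ⊆ ℝ², with ρ > 0 on U, and set p = (R_s/c_v)·e, T = e/(c_v·ρ), and total energy density E = ρv²/2 + e. Assume that at a point (t,x) ∈ U the compressible non-isothermal Euler equations hold: ∂_t ρ + ∂_x(ρv) = 0; ∂_t v + ∂_x(v²/2) + (1/ρ)∂_x p + (λ/(2d))|v|v = 0; ∂_t e + ∂_x(e·v) + p·∂_x v − (λ/(2d))ρ|v|v² + (k_ω/d)(T − T_∞) = 0. Then at (t,x) the friction terms cancel and the local energy identity ∂_t E + ∂_x(v·(E + p)) = −(k_ω/d)·(T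 − T_∞) holds. -/
/-- Partial derivative with respect to the time variable. -/
noncomputable def pderivT (f : ℝ × ℝ → ℝ) (t x : ℝ) : ℝ := deriv (fun τ => f (τ, x)) t

/-- Partial derivative with respect to the space variable. -/
noncomputable def pderivX (f : ℝ × ℝ → ℝ) (t x : ℝ) : ℝ := deriv (fun y => f (t, y)) x

/-- local energy balance with friction cancellation: if `ρ, v, e` are
differentiable on an open set `U` with `ρ > 0`, `p = (R_s/c_v)e`, `T = e/(c_v ρ)`,
`E = ρv²/2 + e`, and the compressible non-isothermal Euler equations hold at a point
`(t,x) ∈ U`, then at `(t,x)` the friction terms cancel and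
`∂_t E + ∂_x(v(E+p)) = −(k_ω/d)(T − T_∞)`. -/
theorem local_energy_balance
    (Rs cv lam kω d Tinf : ℝ) (hRs : 0 < Rs) (hcv : 0 < cv) (hd : d ≠ 0)
    (ρ v e : ℝ × ℝ → ℝ)
    (U : Set (ℝ × ℝ)) (hU : IsOpen U)
    (hρ : DifferentiableOn ℝ ρ U) (hv : DifferentiableOn ℝ v U)
    (he : DifferentiableOn ℝ e U)
    (hρpos : ∀ q ∈ U, 0 < ρ q)
    (t x : ℝ) (hmem : (t, x) ∈ U)
    -- mass balance: ∂_t ρ + ∂_x(ρv) = 0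
    (h1 : pderivT ρ t x + pderivX (fun q => ρ q * v q) t x = 0)
    -- velocity equation: ∂_t v + ∂_x(v²/2) + (1/ρ)∂_x p + (λ/(2d))|v|v = 0
    (h2 : pderivT v t x + pderivX (fun q => v q ^ 2 / 2) t x
        + 1 / ρ (t, x) * pderivX (fun q => Rs / cv * e q) t x
        + lam / (2 * d) * |v (t, x)| * v (t, x) = 0)
    -- internal energy equation:
    -- ∂_t e + ∂_x(e v) + p ∂_x v − (λ/(2d))ρ|v|v² + (k_ω/d)(T − T_∞) = 0
    (h3 : pderivT e t x + pderivX (fun q => e q * v q) t x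
        + Rs / cv * e (t, x) * pderivX v t x
        - lam / (2 * d) * ρ (t, x) * |v (t, x)| * v (t, x) ^ 2
        + kω / d * (e (t, x) / (cv * ρ (t, x)) - Tinf) = 0) :
    pderivT (fun q => ρ q * v q ^ 2 / 2 + e q) t x
      + pderivX (fun q => v q * ((ρ q * v q ^ 2 / 2 + e q) + Rs / cv * e q)) t x
      = -(kω / d) * (e (t, x) / (cv * ρ (t, x)) - Tinf) := by
  have hn := hU.mem_nhds hmem
  have key : ∀ f : ℝ × ℝ → ℝ, DifferentiableOn ℝ f U →
      HasDerivAt (fun τ => f (τ, x)) (pderivT f t x) t ∧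
      HasDerivAt (fun y => f (t, y)) (pderivX f t x) x := by
    intro f hf
    have hd0 : DifferentiableAt ℝ f (t, x) := hf.differentiableAt hn
    constructor
    · have : DifferentiableAt ℝ (fun τ : ℝ => f (τ, x)) t :=
        DifferentiableAt.comp (g := f) (f := fun τ : ℝ => (τ, x)) t hd0 (by fun_prop)
      exact this.hasDerivAt
    · have : DifferentiableAt ℝ (fun y : ℝ => f (t, y)) x :=
        DifferentiableAt.comp (g := f) (f := fun y : ℝ => (t, y)) x hd0 (by fun_prop)
      exact this.hasDerivAt
  obtain ⟨rt, rx⟩ := key ρ hρ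
  obtain ⟨vt, vx⟩ := key v hv
  obtain ⟨et, ex⟩ := key e he
  have hr : ρ (t, x) ≠ 0 := (hρpos _ hmem).ne'
  have e1 : pderivX (fun q => ρ q * v q) t x = _ := (rx.mul vx).deriv
  have e2 : pderivX (fun q => v q ^ 2 / 2) t x = _ := ((vx.pow 2).div_const 2).deriv
  have e3 : pderivX (fun q => Rs / cv * e q) t x = _ := (ex.const_mul (Rs / cv)).deriv
  have e4 : pderivX (fun q => e q * v q) t x = _ := (ex.mul vx).deriv
  have e5 : pderivT (fun q => ρ q * v q ^ 2 / 2 + e q) t x = _ :=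
    (((rt.mul (vt.pow 2)).div_const 2).add et).deriv
  have e6 : pderivX (fun q => v q * ((ρ q * v q ^ 2 / 2 + e q) + Rs / cv * e q)) t x = _ :=
    (vx.mul ((((rx.mul (vx.pow 2)).div_const 2).add ex).add (ex.const_mul (Rs / cv)))).deriv
  rw [e1] at h1
  rw [e2, e3] at h2
  rw [e4] at h3
  rw [e5, e6]
  simp only [Pi.mul_apply, Pi.add_apply, Pi.pow_apply] at *
  have hi : ρ (t, x) * (1 / ρ (t, x)) = 1 := mul_one_div_cancel hr
  generalize e (t, x) / (cv * ρ (t, x)) = T at *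
  generalize 1 / ρ (t, x) = i at *
  generalize Rs / cv = k at *
  generalize lam / (2 * d) = l at *
  generalize kω / d = m at *
  push_cast at *
  linear_combination (v (t, x) ^ 2 / 2) * h1 + ρ (t, x) * v (t, x) * h2 + h3
    - v (t, x) * k * pderivX e t x * hi
end

section
/- (Energy dissipation on a single pipe.) Let ρ, v, e be C¹ on an open neighborhood of [0,t_f] × [0,L] with ρ > 0, set p = (R_s/c_v)·e, T = e/(c_v·ρ), m = ρ·v, E = ρv²/2 + e and h = v²/2 + (e+p)/ρ, and assume the compressible non-isothermal Euler equations ∂_t ρ + ∂_x(ρv) = 0, ∂_t v + ∂_x(v²/2) + (1/ρ)∂_x p + (λ/(2d))|v|v = 0, ∂_t e + ∂_x(e·v) + p·∂_x v − (λ/(2d))ρ|v|v² + (k_ω/d)(T − T_∞) = 0 hold on [0,t_f] × [0,L]. Then the Hamiltonian H(t) = ∫₀ᴸ (ρ(t,x)v(t,x)²/2 + e(t,x)) dx is differentiable in t with H′(t) = m(t,0)·h(t,0) − m(t,L)·h(t,L) − (k_ω/d)·∫₀ᴸ (T(t,x) − T_∞) dx, and if in addition k_ω ≥ 0, d > 0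 and T(t,x) ≥ 0, then H′(t) ≤ ∫₀ᴸ (k_ω/d)·T_∞ dx + m(t,0)·h(t,0) − m(t,L)·h(t,L), i.e. the energy dissipation inequality d/dt H ≤ (f_P, e_P) + f_B·e_B holds with external port (f_P, e_P) = (k_ω/d, T_∞) and boundary port pairing f_B·e_B = m(t,0)h(t,0) − m(t,L)h(t,L). -/
open MeasureTheory intervalIntegral Set

theorem aux_hT {f : ℝ × ℝ → ℝ} {U : Set (ℝ × ℝ)} (hU : IsOpen U) (hf : ContDiffOn ℝ 1 f U)
    {t x : ℝ} (h : (t, x) ∈ U) :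
    HasDerivAt (fun τ => f (τ, x)) (fderiv ℝ f (t, x) (1, 0)) t := by
  have hd : DifferentiableAt ℝ f (t, x) :=
    (hf.differentiableOn one_ne_zero).differentiableAt (hU.mem_nhds h)
  have h2 : HasDerivAt (fun τ : ℝ => (τ, x)) ((1 : ℝ), (0 : ℝ)) t :=
    (hasDerivAt_id t).prodMk (hasDerivAt_const t x)
  exact hd.hasFDerivAt.comp_hasDerivAt t h2

theorem aux_hX {f : ℝ × ℝ → ℝ} {U : Set (ℝ × ℝ)} (hU : IsOpen U) (hf : ContDiffOn ℝ 1 f U)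
    {t x : ℝ} (h : (t, x) ∈ U) :
    HasDerivAt (fun y => f (t, y)) (fderiv ℝ f (t, x) (0, 1)) x := by
  have hd : DifferentiableAt ℝ f (t, x) :=
    (hf.differentiableOn one_ne_zero).differentiableAt (hU.mem_nhds h)
  have h2 : HasDerivAt (fun y : ℝ => (t, y)) ((0 : ℝ), (1 : ℝ)) x :=
    (hasDerivAt_const x t).prodMk (hasDerivAt_id x)
  exact hd.hasFDerivAt.comp_hasDerivAt x h2

theorem aux_slice {f : ℝ × ℝ → ℝ} {U : Set (ℝ × ℝ)} (hf : ContinuousOn f U)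
    {t L : ℝ} (h : ∀ x ∈ Icc (0:ℝ) L, (t, x) ∈ U) :
    ContinuousOn (fun x => f (t, x)) (Icc 0 L) :=
  hf.comp (by fun_prop) h

theorem aux_contD {f : ℝ × ℝ → ℝ} {U : Set (ℝ × ℝ)} (hU : IsOpen U) (hf : ContDiffOn ℝ 1 f U)
    (w : ℝ × ℝ) : ContinuousOn (fun q => fderiv ℝ f q w) U :=
  (hf.continuousOn_fderiv_of_isOpen hU le_rfl).clm_apply continuousOn_const

theorem aux_int {f : ℝ → ℝ} {L : ℝ} (hL : 0 < L) (hf : ContinuousOn f (Icc 0 L)) :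
    IntervalIntegrable f volume 0 L :=
  ContinuousOn.intervalIntegrable (by rwa [uIcc_of_le hL.le])

theorem aux_leibniz {f : ℝ × ℝ → ℝ} {U : Set (ℝ × ℝ)} (hU : IsOpen U) (hf : ContDiffOn ℝ 1 f U)
    {t L : ℝ} (hL : 0 < L) (h : ∀ x ∈ Icc (0:ℝ) L, (t, x) ∈ U) :
    HasDerivAt (fun τ => ∫ x in (0:ℝ)..L, f (τ, x))
      (∫ x in (0:ℝ)..L, fderiv ℝ f (t, x) (1, 0)) t := by
  obtain ⟨u, w, huo, hwo, htu, hLw, huw⟩ := generalized_tube_lemma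
    (isCompact_singleton (x := t)) (isCompact_Icc (a := (0:ℝ)) (b := L)) hU (by
      rintro ⟨a, b⟩ ⟨ha, hb⟩
      simp only [mem_singleton_iff] at ha
      subst ha
      exact h b hb)
  obtain ⟨δ, hδ, hball⟩ := Metric.nhds_basis_closedBall.mem_iff.1
    (huo.mem_nhds (htu (mem_singleton t)))
  have hsub : Metric.closedBall t δ ×ˢ Icc (0:ℝ) L ⊆ U :=
    (prod_mono hball hLw).trans huw
  have hD := aux_contD hU hf (1, 0)
  obtain ⟨C, hC⟩ := ((isCompact_closedBall t δ).prod
    (isCompact_Icc (a := (0:ℝ)) (b := L))).exists_bound_of_continuousOn (hD.mono hsub)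
  have hI : ∀ {x}, x ∈ uIoc (0:ℝ) L → x ∈ Icc (0:ℝ) L := by
    intro x hx
    rw [uIoc_of_le hL.le] at hx
    exact Ioc_subset_Icc_self hx
  refine (intervalIntegral.hasDerivAt_integral_of_dominated_loc_of_deriv_le
    (F := fun τ x => f (τ, x)) (F' := fun τ x => fderiv ℝ f (τ, x) (1, 0))
    (bound := fun _ => C) (s := Metric.closedBall t δ)
    (Metric.closedBall_mem_nhds t hδ) ?_ ?_ ?_ ?_ ?_ ?_).2
  · filter_upwards [Metric.closedBall_mem_nhds t hδ] with τ hτ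
    have := aux_int hL (aux_slice hf.continuousOn (t := τ) fun x hx => hsub ⟨hτ, hx⟩)
    exact (intervalIntegrable_iff.1 this).aestronglyMeasurable
  · exact aux_int hL (aux_slice hf.continuousOn h)
  · exact (intervalIntegrable_iff.1 (aux_int hL (aux_slice hD h))).aestronglyMeasurable
  · exact Filter.Eventually.of_forall fun x hx τ hτ => hC (τ, x) ⟨hτ, hI hx⟩
  · exact intervalIntegrable_const
  · exact Filter.Eventually.of_forall fun x hx τ hτ => aux_hT hU hf (hsub ⟨hτ, hI hx⟩)

/-- energy dissipation on a single pipe: for C¹ solutions of the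
compressible non-isothermal Euler equations on `[0,t_f] × [0,L]` (with `ρ > 0`,
`p = (R_s/c_v)e`, `T = e/(c_v ρ)`, `m = ρv`, `h = v²/2 + (e+p)/ρ`), the Hamiltonian
`H(t) = ∫₀ᴸ (ρv²/2 + e) dx` is differentiable with
`H′(t) = m(t,0)h(t,0) − m(t,L)h(t,L) − (k_ω/d)∫₀ᴸ(T − T_∞) dx`, and if moreover
`k_ω ≥ 0`, `d > 0` and `T ≥ 0`, then
`H′(t) ≤ ∫₀ᴸ (k_ω/d)T_∞ dx + m(t,0)h(t,0) − m(t,L)h(t,L)`. -/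
theorem pipe_energy_dissipation
    (L tf Rs cv lam kω d Tinf : ℝ)
    (hL : 0 < L) (htf : 0 < tf) (hRs : 0 < Rs) (hcv : 0 < cv) (hd : d ≠ 0)
    (ρ v e : ℝ × ℝ → ℝ)
    (U : Set (ℝ × ℝ)) (hU : IsOpen U)
    (hUsub : Icc (0:ℝ) tf ×ˢ Icc (0:ℝ) L ⊆ U)
    (hρ : ContDiffOn ℝ 1 ρ U) (hv : ContDiffOn ℝ 1 v U) (he : ContDiffOn ℝ 1 e U)
    (hρpos : ∀ q ∈ U, 0 < ρ q)
    -- mass balance: ∂_t ρ + ∂_x(ρv) = 0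
    (h1 : ∀ t ∈ Icc (0:ℝ) tf, ∀ x ∈ Icc (0:ℝ) L,
      pderivT ρ t x + pderivX (fun q => ρ q * v q) t x = 0)
    -- velocity equation: ∂_t v + ∂_x(v²/2) + (1/ρ)∂_x p + (λ/(2d))|v|v = 0
    (h2 : ∀ t ∈ Icc (0:ℝ) tf, ∀ x ∈ Icc (0:ℝ) L,
      pderivT v t x + pderivX (fun q => v q ^ 2 / 2) t x
        + 1 / ρ (t, x) * pderivX (fun q => Rs / cv * e q) t x
        + lam / (2 * d) * |v (t, x)| * v (t, x) = 0)
    -- internal energy equation: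
    -- ∂_t e + ∂_x(e v) + p ∂_x v − (λ/(2d))ρ|v|v² + (k_ω/d)(T − T_∞) = 0
    (h3 : ∀ t ∈ Icc (0:ℝ) tf, ∀ x ∈ Icc (0:ℝ) L,
      pderivT e t x + pderivX (fun q => e q * v q) t x
        + Rs / cv * e (t, x) * pderivX v t x
        - lam / (2 * d) * ρ (t, x) * |v (t, x)| * v (t, x) ^ 2
        + kω / d * (e (t, x) / (cv * ρ (t, x)) - Tinf) = 0) :
    ∀ t ∈ Icc (0:ℝ) tf,
      HasDerivAt (fun τ => ∫ x in (0:ℝ)..L, (ρ (τ, x) * v (τ, x) ^ 2 / 2 + e (τ, x)))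
        (ρ (t, 0) * v (t, 0)
            * (v (t, 0) ^ 2 / 2 + (e (t, 0) + Rs / cv * e (t, 0)) / ρ (t, 0))
          - ρ (t, L) * v (t, L)
            * (v (t, L) ^ 2 / 2 + (e (t, L) + Rs / cv * e (t, L)) / ρ (t, L))
          - kω / d * ∫ x in (0:ℝ)..L, (e (t, x) / (cv * ρ (t, x)) - Tinf)) t
      ∧ (0 ≤ kω → 0 < d →
          (∀ t' ∈ Icc (0:ℝ) tf, ∀ x ∈ Icc (0:ℝ) L, 0 ≤ e (t', x) / (cv * ρ (t', x))) →
          ρ (t, 0) * v (t, 0)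
              * (v (t, 0) ^ 2 / 2 + (e (t, 0) + Rs / cv * e (t, 0)) / ρ (t, 0))
            - ρ (t, L) * v (t, L)
              * (v (t, L) ^ 2 / 2 + (e (t, L) + Rs / cv * e (t, L)) / ρ (t, L))
            - kω / d * (∫ x in (0:ℝ)..L, (e (t, x) / (cv * ρ (t, x)) - Tinf))
          ≤ (∫ x in (0:ℝ)..L, kω / d * Tinf)
            + ρ (t, 0) * v (t, 0)
                * (v (t, 0) ^ 2 / 2 + (e (t, 0) + Rs / cv * e (t, 0)) / ρ (t, 0))
            - ρ (t, L) * v (t, L)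
                * (v (t, L) ^ 2 / 2 + (e (t, L) + Rs / cv * e (t, L)) / ρ (t, L))) := by
  intro t ht
  have hmem : ∀ x ∈ Icc (0:ℝ) L, (t, x) ∈ U := fun x hx => hUsub ⟨ht, hx⟩
  have hTc : ContinuousOn (fun q => e q / (cv * ρ q)) U :=
    he.continuousOn.div (continuousOn_const.mul hρ.continuousOn)
      fun q hq => (mul_pos hcv (hρpos q hq)).ne'
  have hTi := aux_int hL (aux_slice hTc hmem)
  have hTi' : IntervalIntegrable (fun x => e (t, x) / (cv * ρ (t, x)) - Tinf) volume 0 L :=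
    hTi.sub intervalIntegrable_const
  constructor
  · have hF : ContDiffOn ℝ 1 (fun q => ρ q * v q ^ 2 / 2 + e q) U :=
      ((hρ.mul (hv.pow 2)).div_const 2).add he
    have hG : ContDiffOn ℝ 1
        (fun q => ρ q * v q ^ 3 / 2 + v q * (e q + Rs / cv * e q)) U :=
      ((hρ.mul (hv.pow 3)).div_const 2).add (hv.mul (he.add (contDiffOn_const.mul he)))
    have key := aux_leibniz hU hF hL hmem
    have hGi := aux_int hL (aux_slice (aux_contD hU hG (0, 1)) hmem)
    have hftc := intervalIntegral.integral_eq_sub_of_hasDerivAt (a := 0) (b := L)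
      (fun x hx => aux_hX hU hG (hmem x (by rwa [uIcc_of_le hL.le] at hx))) hGi
    convert key using 1
    have hpt : ∀ x ∈ Icc (0:ℝ) L,
        fderiv ℝ (fun q => ρ q * v q ^ 2 / 2 + e q) (t, x) (1, 0)
        = -(fderiv ℝ (fun q => ρ q * v q ^ 3 / 2 + v q * (e q + Rs / cv * e q)) (t, x) (0, 1))
          - kω / d * (e (t, x) / (cv * ρ (t, x)) - Tinf) := by
      intro x hx
      have hm := hmem x hx
      have hr := (hρpos _ hm).ne'
      have ρt := aux_hT hU hρ hm
      have vt := aux_hT hU hv hm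
      have et := aux_hT hU he hm
      have ρx := aux_hX hU hρ hm
      have vx := aux_hX hU hv hm
      have ex := aux_hX hU he hm
      have Ft := (aux_hT hU hF hm).unique (((ρt.mul (vt.pow 2)).div_const 2).add et)
      have Gx := (aux_hX hU hG hm).unique
        (((ρx.mul (vx.pow 3)).div_const 2).add (vx.mul (ex.add (ex.const_mul (Rs / cv)))))
      have e1 := h1 t ht x hx
      have e2 := h2 t ht x hx
      have e3 := h3 t ht x hx
      have d1 : pderivX (fun q => ρ q * v q) t x = _ := (ρx.mul vx).deriv
      have d2 : pderivX (fun q => v q ^ 2 / 2) t x = _ := ((vx.pow 2).div_const 2).deriv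
      have d3 : pderivX (fun q => Rs / cv * e q) t x = _ := (ex.const_mul (Rs / cv)).deriv
      have d4 : pderivX (fun q => e q * v q) t x = _ := (ex.mul vx).deriv
      have d5 : pderivX v t x = _ := vx.deriv
      have d6 : pderivT ρ t x = _ := ρt.deriv
      have d7 : pderivT v t x = _ := vt.deriv
      have d8 : pderivT e t x = _ := et.deriv
      rw [d1, d6] at e1
      rw [d2, d3, d7] at e2
      rw [d4, d5, d8] at e3
      rw [Ft, Gx]
      clear Ft Gx d1 d2 d3 d4 d5 d6 d7 d8 ρt vt et ρx vx ex
      generalize fderiv ℝ ρ (t, x) (1, 0) = ρt at *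
      generalize fderiv ℝ v (t, x) (1, 0) = vt at *
      generalize fderiv ℝ e (t, x) (1, 0) = et at *
      generalize fderiv ℝ ρ (t, x) (0, 1) = ρx at *
      generalize fderiv ℝ v (t, x) (0, 1) = vx at *
      generalize fderiv ℝ e (t, x) (0, 1) = ex at *
      generalize e (t, x) / (cv * ρ (t, x)) - Tinf = Q at *
      have hinv : ρ (t, x) * (1 / ρ (t, x)) = 1 := by field_simp
      generalize 1 / ρ (t, x) = ir at *
      simp only [Nat.cast_ofNat, Nat.add_one_sub_one, pow_one, Pi.pow_apply] at *
      linear_combination (v (t, x) ^ 2 / 2) * e1 + ρ (t, x) * v (t, x) * e2 + e3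
        - v (t, x) * (Rs / cv) * ex * hinv
    have hGn : IntervalIntegrable (fun x => -(fderiv ℝ (fun q => ρ q * v q ^ 3 / 2 + v q * (e q + Rs / cv * e q)) (t, x) (0, 1))) volume 0 L := hGi.neg
    have hr0 := (hρpos _ (hmem 0 ⟨le_rfl, hL.le⟩)).ne'
    have hrL := (hρpos _ (hmem L ⟨hL.le, le_rfl⟩)).ne'
    rw [intervalIntegral.integral_congr (g := fun x =>
      -(fderiv ℝ (fun q => ρ q * v q ^ 3 / 2 + v q * (e q + Rs / cv * e q)) (t, x) (0, 1))
          - kω / d * (e (t, x) / (cv * ρ (t, x)) - Tinf))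
      (fun x hx => hpt x (by rwa [uIcc_of_le hL.le] at hx)),
      intervalIntegral.integral_sub hGn (hTi'.const_mul _),
      intervalIntegral.integral_neg, intervalIntegral.integral_const_mul, hftc]
    have a0 : ∀ r w E : ℝ, r ≠ 0 → r * w * (w ^ 2 / 2 + (E + Rs / cv * E) / r)
        = r * w ^ 3 / 2 + w * (E + Rs / cv * E) := by
      intro r w E hr
      field_simp
    rw [a0 _ _ _ hr0, a0 _ _ _ hrL]
    ring
  · intro hk hd' hT
    have hnn : 0 ≤ ∫ x in (0:ℝ)..L, e (t, x) / (cv * ρ (t, x)) :=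
      intervalIntegral.integral_nonneg hL.le fun x hx => hT t ht x hx
    rw [intervalIntegral.integral_sub hTi intervalIntegrable_const,
      intervalIntegral.integral_const_mul]
    have := mul_nonneg (div_nonneg hk hd'.le) hnn
    linarith
end

section
/- (Energy dissipation on a network.) Suppose each edge ω ∈ Ed has two distinct endpoints ν(ω) ≠ ν̄(ω) in N, and E(ν) = {ω ∈ Ed : ν ∈ {ν(ω), ν̄(ω)}}. Fix t ∈ ℝ and suppose: (i) for each edge ω the pipe Hamiltonian H_ω : ℝ → ℝ is differentiable at t with derivative g_ω satisfying g_ω ≤ P_ω + f(ω,ν(ω))·e(ω,ν(ω)) + f(ω,ν̄(ω))·e(ω,ν̄(ω)); (ii) at every interior node ν ∈ N₀ one has ∑_{ω ∈ E(ν)} f(ω,ν) = 0 and there exists λ_ν ∈ ℝ with e(ω,ν) = λ_ν for all ω ∈ E(ν). Then the network Hamiltonian t ↦ ∑_{ω ∈ Ed} H_ω(t) is differentiable at t with derivative ∑_{ω ∈ Ed} g_ω, and ∑_{ω ∈ Ed} g_ω ≤ ∑_{ω ∈ Ed} P_ω + ∑_{ν ∈ N∂} ∑_{ω ∈ E(ν)}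 f(ω,ν)·e(ω,ν), i.e. the coupled network dissipates energy up to the external ports and the boundary-node port pairing. -/
/-- energy dissipation on a network: suppose each edge `ω` has two
distinct endpoints `ν(ω) ≠ ν̄(ω)` in the node set `N`, with
`E(ν) = {ω ∈ Ed : ν ∈ {ν(ω), ν̄(ω)}}`. If (i) each pipe Hamiltonian `H_ω` is
differentiable at `t` with derivative `g_ω` satisfying
`g_ω ≤ P_ω + f(ω,ν(ω))·e(ω,ν(ω)) + f(ω,ν̄(ω))·e(ω,ν̄(ω))`, and (ii) at every interior
node `ν ∈ N₀` one has `∑_{ω ∈ E(ν)} f(ω,ν) = 0` and all boundary efforts at `ν` are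
equal, then the network Hamiltonian `∑_ω H_ω` is differentiable at `t` with derivative
`∑_ω g_ω`, and `∑_ω g_ω ≤ ∑_ω P_ω + ∑_{ν ∈ N∂} ∑_{ω ∈ E(ν)} f(ω,ν)·e(ω,ν)`. -/
theorem network_energy_dissipation
    {ιN ιE : Type*} [DecidableEq ιN] [DecidableEq ιE]
    (N N₀ : Finset ιN) (hN₀ : N₀ ⊆ N)
    (Ed : Finset ιE)
    (νa νb : ιE → ιN)
    (hdistinct : ∀ ω ∈ Ed, νa ω ≠ νb ω)
    (hendpoints : ∀ ω ∈ Ed, νa ω ∈ N ∧ νb ω ∈ N)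
    (f e : ιE → ιN → ℝ)
    (H : ιE → ℝ → ℝ) (g P : ιE → ℝ) (t : ℝ)
    (hH : ∀ ω ∈ Ed, HasDerivAt (H ω) (g ω) t)
    (hg : ∀ ω ∈ Ed, g ω ≤ P ω + f ω (νa ω) * e ω (νa ω) + f ω (νb ω) * e ω (νb ω))
    (hcoupling : ∀ ν ∈ N₀,
      ∑ ω ∈ Ed.filter (fun ω => ν = νa ω ∨ ν = νb ω), f ω ν = 0)
    (heffort : ∀ ν ∈ N₀, ∃ lam : ℝ,
      ∀ ω ∈ Ed.filter (fun ω => ν = νa ω ∨ ν = νb ω), e ω ν = lam) :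
    HasDerivAt (fun τ => ∑ ω ∈ Ed, H ω τ) (∑ ω ∈ Ed, g ω) t
    ∧ ∑ ω ∈ Ed, g ω
        ≤ ∑ ω ∈ Ed, P ω
          + ∑ ν ∈ N \ N₀, ∑ ω ∈ Ed.filter (fun ω => ν = νa ω ∨ ν = νb ω),
              f ω ν * e ω ν := by
  refine ⟨HasDerivAt.fun_sum hH, ?_⟩
  have hint : ∑ ν ∈ N₀, ∑ ω ∈ Ed.filter (fun ω => ν = νa ω ∨ ν = νb ω), f ω ν * e ω ν = 0 := by
    refine Finset.sum_eq_zero fun ν hν => ?_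
    obtain ⟨lam, hl⟩ := heffort ν hν
    rw [Finset.sum_congr rfl (fun ω hω => by rw [hl ω hω]), ← Finset.sum_mul,
      hcoupling ν hν, zero_mul]
  have hsplit := Finset.sum_sdiff (f := fun ν =>
    ∑ ω ∈ Ed.filter (fun ω => ν = νa ω ∨ ν = νb ω), f ω ν * e ω ν) hN₀
  have hswap : ∑ ν ∈ N, ∑ ω ∈ Ed.filter (fun ω => ν = νa ω ∨ ν = νb ω), f ω ν * e ω ν
      = ∑ ω ∈ Ed, (f ω (νa ω) * e ω (νa ω) + f ω (νb ω) * e ω (νb ω)) := by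
    simp_rw [Finset.sum_filter]
    rw [Finset.sum_comm]
    refine Finset.sum_congr rfl fun ω hω => ?_
    rw [← Finset.sum_filter]
    have hset : N.filter (fun ν => ν = νa ω ∨ ν = νb ω) = {νa ω, νb ω} := by
      ext ν
      have h := hendpoints ω hω
      simp only [Finset.mem_filter, Finset.mem_insert, Finset.mem_singleton]
      constructor
      · exact fun h => h.2
      · rintro (rfl | rfl)
        · exact ⟨h.1, Or.inl rfl⟩
        · exact ⟨h.2, Or.inr rfl⟩
    rw [hset, Finset.sum_pair (hdistinct ω hω)]
  have hle := Finset.sum_le_sum hg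
  simp only [Finset.sum_add_distrib] at hle hswap
  linarith
end
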